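/- arXiv:2309.08598 — 2 statements merged into one kernel-verified Lean document; each statement's English description precedes it below -/
import Mathlib

section
/- Let f : ℝ^k → (0,∞) be locally integrable and weakly differentiable with weak gradient ∇f. If |∇f|/f and log f are locally integrable, then log f is weakly differentiable with weak gradient ∇f/f; that is, ∫ (div h) · log f dx = −∫ h · (∇f/f) dx for every smooth compactly supported vector field h : ℝ^k → ℝ^k. -/
open MeasureTheory
open scoped RealInnerProductSpace

noncomputable section

variable {k : ℕ}

local notation "E" => EuclideanSpace ℝ (Fin k)

/-- The divergence of a vector field on `ℝ^k`, as the trace of its Jacobian. -/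
def dvg (h : E → E) (x : E) : ℝ :=
  ∑ i : Fin k, ⟪fderiv ℝ h x (EuclideanSpace.single i 1), EuclideanSpace.single i 1⟫

/-- `g` is the weak gradient of `f`: both are locally integrable and
`∫ f div h = −∫ ⟪g, h⟫` for all smooth compactly supported vector fields `h`. -/
def HasWeakGradient (f : E → ℝ) (g : E → E) : Prop :=
  LocallyIntegrable f volume ∧ LocallyIntegrable g volume ∧
  ∀ h : E → E, ContDiff ℝ (⊤ : ℕ∞) h → HasCompactSupport h →
    ∫ x, f x * dvg h x = - ∫ x, ⟪g x, h x⟫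

open Filter Topology Metric ContinuousLinearMap
open scoped Convolution ContDiff

/-- Mollification is an `L¹` contraction. -/
theorem moll_contraction {G : Type*} [NormedAddCommGroup G] [NormedSpace ℝ G] [CompleteSpace G]
    (φ : ContDiffBump (0 : E)) (u : E → G) (hu : Integrable u volume) :
    ∫ x, ‖(φ.normed volume ⋆[lsmul ℝ ℝ, volume] u) x‖ ≤ ∫ x, ‖u x‖ := by
  have h1 : ∫ x, (φ.normed volume ⋆[lsmul ℝ ℝ, volume] (fun y => ‖u y‖)) x = ∫ x, ‖u x‖ := by
    rw [integral_convolution (lsmul ℝ ℝ) φ.integrable_normed hu.norm, φ.integral_normed]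
    simp
  rw [← h1]
  refine integral_mono_of_nonneg (Eventually.of_forall fun x => norm_nonneg _)
    (φ.integrable_normed.integrable_convolution (lsmul ℝ ℝ) hu.norm)
    (Eventually.of_forall fun x => ?_)
  simp only [convolution_def, lsmul_apply]
  refine (norm_integral_le_integral_norm _).trans (le_of_eq ?_)
  congr 1
  ext t
  rw [norm_smul, Real.norm_of_nonneg (φ.nonneg_normed t), smul_eq_mul]

theorem moll_cont {G : Type*} [NormedAddCommGroup G] [NormedSpace ℝ G] [CompleteSpace G]
    (φ : ℕ → ContDiffBump (0 : E)) (hφ : Tendsto (fun n => (φ n).rOut) atTop (𝓝 0))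
    (u : E → G) (hu : Continuous u) (hc : HasCompactSupport u) :
    Tendsto (fun n => ∫ x, ‖((φ n).normed volume ⋆[lsmul ℝ ℝ, volume] u) x - u x‖)
      atTop (𝓝 0) := by
  set S : Set E := cthickening 1 (tsupport u) with hS
  have hSc : IsCompact S := hc.cthickening
  rw [Metric.tendsto_atTop]
  intro ε hε
  obtain ⟨η, hη, hηε⟩ : ∃ η : ℝ, 0 < η ∧ η * volume.real S < ε := by
    refine ⟨ε / (volume.real S + 1), by positivity, ?_⟩
    have : 0 ≤ volume.real S := measureReal_nonneg
    rw [div_mul_eq_mul_div, div_lt_iff₀ (by positivity)]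
    nlinarith
  have huc : UniformContinuous u := hc.uniformContinuous_of_continuous hu
  obtain ⟨δ, hδ, hδ'⟩ := Metric.uniformContinuous_iff.1 huc η hη
  obtain ⟨N, hN⟩ := (Metric.tendsto_atTop.1 hφ) (min δ 1) (by positivity)
  refine ⟨N, fun n hn => ?_⟩
  have hr := hN n hn
  rw [Real.dist_eq, sub_zero, abs_of_pos (φ n).rOut_pos, lt_min_iff] at hr
  have hpt : ∀ x, ‖((φ n).normed volume ⋆[lsmul ℝ ℝ, volume] u) x - u x‖
      ≤ S.indicator (fun _ => η) x := by
    intro x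
    by_cases hx : x ∈ S
    · rw [Set.indicator_of_mem hx, ← dist_eq_norm]
      refine ContDiffBump.dist_normed_convolution_le hu.aestronglyMeasurable ?_
      intro y hy
      exact (hδ' ((mem_ball.1 hy).trans hr.1)).le
    · rw [Set.indicator_of_notMem hx]
      have hz : ∀ y ∈ ball x (φ n).rOut, u y = 0 := by
        intro y hy
        by_contra hne
        apply hx
        have hy' : y ∈ tsupport u := subset_tsupport u hne
        refine mem_cthickening_of_dist_le x y 1 _ hy' ?_
        rw [dist_comm]
        exact ((mem_ball.1 hy).trans hr.2).le
      have hx0 : u x = 0 := hz x (mem_ball_self (φ n).rOut_pos)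
      rw [ContDiffBump.normed_convolution_eq_right (fun y hy => by rw [hz y hy, hx0])]
      simp
  rw [Real.dist_eq, sub_zero, abs_of_nonneg (integral_nonneg fun x => norm_nonneg _)]
  refine lt_of_le_of_lt ?_ hηε
  have hint : Integrable (S.indicator (fun _ => η)) (volume : Measure E) :=
    (integrable_indicator_iff hSc.measurableSet).2
      (integrableOn_const hSc.measure_lt_top.ne)
  refine (integral_mono_of_nonneg (Eventually.of_forall fun x => norm_nonneg _) hint
    (Eventually.of_forall hpt)).trans ?_
  rw [integral_indicator hSc.measurableSet, setIntegral_const, smul_eq_mul, mul_comm]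

theorem moll_L1 {G : Type*} [NormedAddCommGroup G] [NormedSpace ℝ G] [CompleteSpace G]
    (φ : ℕ → ContDiffBump (0 : E)) (hφ : Tendsto (fun n => (φ n).rOut) atTop (𝓝 0))
    (u : E → G) (hu : Integrable u volume) :
    Tendsto (fun n => ∫ x, ‖((φ n).normed volume ⋆[lsmul ℝ ℝ, volume] u) x - u x‖)
      atTop (𝓝 0) := by
  rw [Metric.tendsto_atTop]
  intro ε hε
  obtain ⟨w, hwc, hw, hwcont, hwi⟩ := hu.exists_hasCompactSupport_integral_sub_le
    (ε := ε / 3) (by positivity)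
  obtain ⟨N, hN⟩ := (Metric.tendsto_atTop.1 (moll_cont φ hφ w hwcont hwc)) (ε / 3) (by positivity)
  refine ⟨N, fun n hn => ?_⟩
  have h := hN n hn
  rw [Real.dist_eq, sub_zero, abs_of_nonneg (integral_nonneg fun x => norm_nonneg _)] at h ⊢
  have hd : Integrable (u - w) volume := hu.sub hwi
  have hcw := (φ n).integrable_normed (μ := volume).integrable_convolution (lsmul ℝ ℝ) hwi
  have hcd := (φ n).integrable_normed (μ := volume).integrable_convolution (lsmul ℝ ℝ) hd
  have hcon := moll_contraction (φ n) (u - w) hd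
  have hsum : ∀ x, ((φ n).normed volume ⋆[lsmul ℝ ℝ, volume] u) x =
      ((φ n).normed volume ⋆[lsmul ℝ ℝ, volume] (u - w)) x +
      ((φ n).normed volume ⋆[lsmul ℝ ℝ, volume] w) x := by
    intro x
    have e1 := (φ n).hasCompactSupport_normed (μ := volume).convolutionExists_left (lsmul ℝ ℝ)
      (φ n).continuous_normed hd.locallyIntegrable x
    have e2 := (φ n).hasCompactSupport_normed (μ := volume).convolutionExists_left (lsmul ℝ ℝ)
      (φ n).continuous_normed hwi.locallyIntegrable x
    rw [← e1.distrib_add e2, sub_add_cancel]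
  calc _ ≤ ∫ x, (‖((φ n).normed volume ⋆[lsmul ℝ ℝ, volume] (u - w)) x‖ +
        ‖((φ n).normed volume ⋆[lsmul ℝ ℝ, volume] w) x - w x‖ + ‖(u - w) x‖) := by
        refine integral_mono_of_nonneg (Eventually.of_forall fun x => norm_nonneg _)
          ((hcd.norm.add (hcw.sub hwi).norm).add hd.norm) (Eventually.of_forall fun x => ?_)
        simp only
        rw [hsum x]
        refine le_trans (le_of_eq ?_) ((norm_sub_le _ _).trans
          (add_le_add_left (norm_add_le _ _) _))
        congr 1
        simp only [Pi.sub_apply]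
        abel
    _ = (∫ x, ‖((φ n).normed volume ⋆[lsmul ℝ ℝ, volume] (u - w)) x‖) +
        (∫ x, ‖((φ n).normed volume ⋆[lsmul ℝ ℝ, volume] w) x - w x‖) + ∫ x, ‖(u - w) x‖ := by
        have e1 : Integrable (fun x => ‖((φ n).normed volume ⋆[lsmul ℝ ℝ, volume] (u - w)) x‖)
          volume := hcd.norm
        have e2 : Integrable (fun x => ‖((φ n).normed volume ⋆[lsmul ℝ ℝ, volume] w) x - w x‖)
          volume := (hcw.sub hwi).norm
        rw [← integral_add e1 e2]
        exact integral_add (e1.add e2) hd.norm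
    _ < ε := by
        have : ∫ x, ‖(u - w) x‖ ≤ ε / 3 := hw
        linarith

theorem moll_L1loc {G : Type*} [NormedAddCommGroup G] [NormedSpace ℝ G] [CompleteSpace G]
    (φ : ℕ → ContDiffBump (0 : E)) (hφ : Tendsto (fun n => (φ n).rOut) atTop (𝓝 0))
    (u : E → G) (hu : LocallyIntegrable u volume) (K : Set E) (hK : IsCompact K) :
    Tendsto (fun n => ∫ x in K, ‖((φ n).normed volume ⋆[lsmul ℝ ℝ, volume] u) x - u x‖)
      atTop (𝓝 0) := by
  set S : Set E := cthickening 1 K with hS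
  have hSc : IsCompact S := hK.cthickening
  have hui : Integrable (S.indicator u) volume :=
    (integrable_indicator_iff hSc.measurableSet).2 (hu.integrableOn_isCompact hSc)
  have key := moll_L1 φ hφ _ hui
  have hev : ∀ᶠ n in atTop, (φ n).rOut < 1 := (tendsto_order.1 hφ).2 1 one_pos
  refine squeeze_zero' (Eventually.of_forall fun n => integral_nonneg fun x => norm_nonneg _)
    ?_ key
  filter_upwards [hev] with n hn
  have hI : Integrable (fun x => ‖((φ n).normed volume ⋆[lsmul ℝ ℝ, volume] S.indicator u) x
      - S.indicator u x‖) volume :=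
    (((φ n).integrable_normed.integrable_convolution (lsmul ℝ ℝ) hui).sub hui).norm
  refine le_trans (le_of_eq ?_) (setIntegral_le_integral (s := K) hI
    (Eventually.of_forall fun x => norm_nonneg _))
  refine setIntegral_congr_fun hK.measurableSet fun x hx => ?_
  have hxS : x ∈ S := self_subset_cthickening K hx
  rw [Set.indicator_of_mem hxS]
  congr 2
  simp only [convolution_def, lsmul_apply]
  congr 1
  ext t
  by_cases ht : t ∈ ball (0 : E) (φ n).rOut
  · rw [Set.indicator_of_mem]
    refine mem_cthickening_of_dist_le _ x 1 _ hx ?_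
    rw [mem_ball_zero_iff] at ht
    rw [dist_eq_norm, sub_sub_cancel_left, norm_neg]
    exact (ht.trans hn).le
  · rw [← (φ n).support_normed_eq (μ := volume), Function.notMem_support] at ht
    rw [ht, zero_smul, zero_smul]

theorem dvg_eq (h : E → E) (hh : Differentiable ℝ h) (x : E) :
    dvg h x = ∑ i : Fin k, fderiv ℝ (fun y => h y i) x (EuclideanSpace.single i 1) := by
  unfold dvg
  refine Finset.sum_congr rfl fun i _ => ?_
  have : HasFDerivAt (fun y => h y i)
      ((EuclideanSpace.proj (𝕜 := ℝ) i).comp (fderiv ℝ h x)) x :=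
    (EuclideanSpace.proj (𝕜 := ℝ) i : E →L[ℝ] ℝ).hasFDerivAt.comp x
      (hh x).hasFDerivAt
  rw [this.fderiv]
  simp [EuclideanSpace.inner_single_right]

theorem dvg_cont (h : E → E) (hh : ContDiff ℝ (⊤ : ℕ∞) h) : Continuous (dvg h) := by
  unfold dvg
  have := hh.continuous_fderiv (by simp)
  fun_prop

theorem dvg_supp (h : E → E) : tsupport (dvg h) ⊆ tsupport h := by
  refine (closure_mono ?_).trans (tsupport_fderiv_subset ℝ (f := h))
  intro x hx hx'
  apply hx
  simp [dvg, hx']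

/-- Integration by parts for a `C¹` function. -/
theorem smooth_ibp (w : E → ℝ) (hw : ContDiff ℝ 1 w) (h : E → E)
    (hh : ContDiff ℝ (⊤ : ℕ∞) h) (hc : HasCompactSupport h) :
    ∫ x, w x * dvg h x = - ∫ x, fderiv ℝ w x (h x) := by
  have hd : Differentiable ℝ h := hh.differentiable (by simp)
  have hfw : Continuous (fderiv ℝ w) := hw.continuous_fderiv (by simp)
  have hhi : ∀ i, ContDiff ℝ (⊤ : ℕ∞) (fun y => h y i) := fun i => by fun_prop
  have hci : ∀ i, HasCompactSupport (fun y => h y i) := fun i =>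
    hc.comp_left (g := fun v : E => v i) rfl
  have hfhi : ∀ i, Continuous (fderiv ℝ (fun y => h y i)) := fun i =>
    (hhi i).continuous_fderiv (by simp)
  have I1 : ∀ i, Integrable (fun x => w x * fderiv ℝ (fun y => h y i) x
      (EuclideanSpace.single i 1)) volume := fun i => by
    refine Continuous.integrable_of_hasCompactSupport
      (hw.continuous.mul ((hfhi i).clm_apply continuous_const)) ?_
    exact (((hci i).fderiv ℝ).comp_left (g := fun L : E →L[ℝ] ℝ => L (EuclideanSpace.single i 1))
      rfl).mul_left
  have I2 : ∀ i, Integrable (fun x => fderiv ℝ w x (EuclideanSpace.single i 1) * h x i)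
      volume := fun i => by
    refine Continuous.integrable_of_hasCompactSupport
      ((hfw.clm_apply continuous_const).mul (hhi i).continuous) ?_
    exact (hci i).mul_left
  have I3 : ∀ i, Integrable (fun x => w x * h x i) volume := fun i =>
    Continuous.integrable_of_hasCompactSupport
      (hw.continuous.mul (hhi i).continuous) (hci i).mul_left
  have e1 : ∀ x, w x * dvg h x = ∑ i : Fin k, w x * fderiv ℝ (fun y => h y i) x
      (EuclideanSpace.single i 1) := fun x => by
    rw [dvg_eq h hd, Finset.mul_sum]
  have e2 : ∀ x, fderiv ℝ w x (h x) =
      ∑ i : Fin k, fderiv ℝ w x (EuclideanSpace.single i 1) * h x i := fun x => by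
    have : h x = ∑ i : Fin k, h x i • EuclideanSpace.single i (1 : ℝ) := by
      ext j
      simp [Finset.sum_apply, Pi.single_apply]
    conv_lhs => rw [this]
    rw [map_sum]
    refine Finset.sum_congr rfl fun i _ => ?_
    rw [map_smul, smul_eq_mul, mul_comm]
  simp_rw [e1, e2]
  rw [integral_finsetSum _ fun i _ => I1 i, integral_finsetSum _ fun i _ => I2 i,
    ← Finset.sum_neg_distrib]
  refine Finset.sum_congr rfl fun i _ => ?_
  exact integral_mul_fderiv_eq_neg_fderiv_mul_of_integrable (I2 i) (I1 i) (I3 i)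
    (fun x _ => hw.differentiable (by simp) x)
    (fun x _ => (hhi i).differentiable (by simp) x)

/-- Gradient of a mollification. -/
theorem moll_fderiv (φ : ContDiffBump (0 : E)) (f : E → ℝ) (g : E → E)
    (hfg : HasWeakGradient f g) (x v : E) :
    fderiv ℝ (φ.normed volume ⋆[lsmul ℝ ℝ, volume] f) x v =
      ⟪(φ.normed volume ⋆[lsmul ℝ ℝ, volume] g) x, v⟫ := by
  obtain ⟨hf, hg, hw⟩ := hfg
  set ψ : E → ℝ := φ.normed volume with hψ
  have hψs : ContDiff ℝ (⊤ : ℕ∞) ψ := φ.contDiff_normed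
  have hψc : HasCompactSupport ψ := φ.hasCompactSupport_normed
  have hψ1 : ContDiff ℝ 1 ψ := hψs.of_le (by simp)
  have hD := hψc.hasFDerivAt_convolution_left (lsmul ℝ ℝ) hψ1 hf x
  rw [hD.fderiv]
  have ex1 := (hψc.fderiv ℝ).convolutionExists_left ((lsmul ℝ ℝ : ℝ →L[ℝ] ℝ →L[ℝ] ℝ).precompL E)
    (hψ1.continuous_fderiv (by simp)) hf x
  have ex2 := hψc.convolutionExists_left (lsmul ℝ ℝ : ℝ →L[ℝ] E →L[ℝ] E) hψs.continuous hg x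
  rw [convolution_eq_swap, convolution_eq_swap, ContinuousLinearMap.integral_apply ex1.integrable_swap,
    real_inner_comm, ← integral_inner ex2.integrable_swap]
  set h : E → E := fun y => ψ (x - y) • v with hh
  have hs : ContDiff ℝ (⊤ : ℕ∞) h := by
    have : ContDiff ℝ (⊤ : ℕ∞) (fun y => ψ (x - y)) := hψs.comp (contDiff_const.sub contDiff_id)
    exact this.smul contDiff_const
  have hcs : HasCompactSupport h := by
    have : HasCompactSupport (fun y => ψ (x - y)) :=
      hψc.comp_homeomorph (Homeomorph.subLeft x)
    exact this.smul_right
  have hfd : ∀ y, HasFDerivAt h ((-(fderiv ℝ ψ (x - y))).smulRight v) y := by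
    intro y
    have h0 : HasFDerivAt (fun y => x - y) (-(ContinuousLinearMap.id ℝ E)) y :=
      (hasFDerivAt_id y).const_sub x
    have h1 := ((hψ1.differentiable (by simp) (x - y)).hasFDerivAt.comp y h0).smul_const v
    have h2 : (fderiv ℝ ψ (x - y) ∘SL (-ContinuousLinearMap.id ℝ E)).smulRight v =
        (-(fderiv ℝ ψ (x - y))).smulRight v := by
      congr 1
      ext z
      simp
    rw [h2] at h1
    exact h1
  have hdv : ∀ y, dvg h y = - fderiv ℝ ψ (x - y) v := by
    intro y
    have : v = ∑ i : Fin k, v i • EuclideanSpace.single i (1 : ℝ) := by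
      ext j
      simp [Finset.sum_apply, Pi.single_apply]
    conv_rhs => rw [this]
    unfold dvg
    rw [(hfd y).fderiv, map_sum, ← Finset.sum_neg_distrib]
    refine Finset.sum_congr rfl fun i _ => ?_
    simp [EuclideanSpace.inner_single_right, mul_comm]
  have := hw h hs hcs
  simp_rw [hdv] at this
  have t1 : ∫ y, (((lsmul ℝ ℝ : ℝ →L[ℝ] ℝ →L[ℝ] ℝ).precompL E) (fderiv ℝ ψ (x - y)) (f y)) v
      = - ∫ y, f y * -(fderiv ℝ ψ (x - y)) v := by
    rw [← integral_neg]
    congr 1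
    ext y
    simp [mul_comm]
  rw [t1, this, neg_neg]
  congr 1
  ext y
  simp [hh, real_inner_smul_right, real_inner_comm]

theorem abs_integral_le_of_indicator {G : Type*} [NormedAddCommGroup G] (s : E → ℝ) (u : E → G)
    (K : Set E) (hK : MeasurableSet K) (hu : IntegrableOn u K volume) (M : ℝ)
    (hs : ∀ x, |s x| ≤ K.indicator (fun x => M * ‖u x‖) x) :
    |∫ x, s x| ≤ M * ∫ x in K, ‖u x‖ := by
  rw [← integral_const_mul, ← integral_indicator hK]
  have hi : Integrable (K.indicator (fun x => M * ‖u x‖)) volume :=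
    (integrable_indicator_iff hK).2 (hu.norm.const_mul M)
  rw [← Real.norm_eq_abs]
  refine norm_integral_le_of_norm_le hi (Eventually.of_forall fun x => ?_)
  rw [Real.norm_eq_abs]
  exact hs x

theorem integrable_inner_test (u h : E → E) (hu : LocallyIntegrable u volume)
    (hh : Continuous h) (hc : HasCompactSupport h) :
    Integrable (fun x => ⟪u x, h x⟫) volume := by
  obtain ⟨C, hC⟩ := hh.bounded_above_of_compact_support hc
  have hK : IsCompact (tsupport h) := hc
  have hi : Integrable ((tsupport h).indicator (fun x => C * ‖u x‖)) volume :=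
    (integrable_indicator_iff hK.measurableSet).2
      ((hu.integrableOn_isCompact hK).norm.const_mul C)
  refine hi.mono' (hu.aestronglyMeasurable.inner hh.aestronglyMeasurable)
    (Eventually.of_forall fun x => ?_)
  by_cases hx : x ∈ tsupport h
  · rw [Set.indicator_of_mem hx, mul_comm]
    exact (norm_inner_le_norm _ _).trans (mul_le_mul_of_nonneg_left (hC x) (norm_nonneg _))
  · rw [Set.indicator_of_notMem hx, image_eq_zero_of_notMem_tsupport hx]
    simp

theorem log_lip {ε a b : ℝ} (hε : 0 < ε) (ha : 0 ≤ a) (hb : 0 ≤ b) :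
    |Real.log (a + ε) - Real.log (b + ε)| ≤ ε⁻¹ * |a - b| := by
  have key : ∀ {a b : ℝ}, 0 ≤ a → 0 ≤ b →
      Real.log (a + ε) - Real.log (b + ε) ≤ ε⁻¹ * |a - b| := by
    intro a b ha hb
    rw [← Real.log_div (by positivity) (by positivity)]
    refine (Real.log_le_sub_one_of_pos (by positivity)).trans ?_
    have : (a + ε) / (b + ε) - 1 = (b + ε)⁻¹ * (a - b) := by field_simp; ring
    rw [this]
    exact (mul_le_mul_of_nonneg_left (le_abs_self _) (by positivity)).trans
        (mul_le_mul_of_nonneg_right (inv_anti₀ hε (by linarith)) (abs_nonneg _))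
  rw [abs_le]
  constructor
  · have := key hb ha
    rw [abs_sub_comm] at this
    linarith
  · exact key ha hb

theorem log_abs_le {ε a : ℝ} (hε : 0 < ε) (ha : 0 < a) :
    |Real.log (a + ε)| ≤ |Real.log a| + (a + ε) := by
  have h1 : Real.log a ≤ Real.log (a + ε) := Real.log_le_log ha (by linarith)
  have h2 := Real.log_le_sub_one_of_pos (show 0 < a + ε by positivity)
  have h3 := neg_abs_le (Real.log a)
  have h4 := abs_nonneg (Real.log a)
  rw [abs_le]
  constructor <;> linarith

/-- The chain rule for `log (f + ε)`. -/
theorem eps_step (f : E → ℝ) (hfpos : ∀ x, 0 < f x) (g : E → E) (hfg : HasWeakGradient f g)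
    (ε : ℝ) (hε : 0 < ε) (hl : LocallyIntegrable (fun x => Real.log (f x + ε)) volume)
    (h : E → E) (hh : ContDiff ℝ (⊤ : ℕ∞) h) (hc : HasCompactSupport h) :
    ∫ x, Real.log (f x + ε) * dvg h x = - ∫ x, (f x + ε)⁻¹ * ⟪g x, h x⟫ := by
  have hf : LocallyIntegrable f volume := hfg.1
  have hg : LocallyIntegrable g volume := hfg.2.1
  let φ : ℕ → ContDiffBump (0 : E) := fun n =>
    { rIn := 1 / ((n : ℝ) + 1)
      rOut := 2 * (1 / ((n : ℝ) + 1))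
      rIn_pos := by positivity
      rIn_lt_rOut := by
        have : 0 < 1 / ((n : ℝ) + 1) := by positivity
        linarith }
  have hφ : Tendsto (fun n => (φ n).rOut) atTop (𝓝 0) := by
    have := (tendsto_one_div_add_atTop_nhds_zero_nat (𝕜 := ℝ)).const_mul 2
    rw [mul_zero] at this
    exact this
  have hφ2 : ∀ᶠ n in atTop, (φ n).rOut ≤ 2 * (φ n).rIn := Eventually.of_forall fun n => le_rfl
  set F : ℕ → E → ℝ := fun n => (φ n).normed volume ⋆[lsmul ℝ ℝ, volume] f with hF
  set H : ℕ → E → E := fun n => (φ n).normed volume ⋆[lsmul ℝ ℝ, volume] g with hH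
  have hae : ∀ᵐ x, Tendsto (fun n => F n x) atTop (𝓝 (f x)) :=
    ContDiffBump.ae_convolution_tendsto_right_of_locallyIntegrable hφ hφ2 hf
  have hFs : ∀ n, ContDiff ℝ 1 (F n) := fun n =>
    ((φ n).hasCompactSupport_normed.contDiff_convolution_left (lsmul ℝ ℝ) (n := 1)
      (φ n).contDiff_normed hf)
  have hHc : ∀ n, Continuous (H n) := fun n =>
    (φ n).hasCompactSupport_normed.continuous_convolution_left (lsmul ℝ ℝ)
      (φ n).continuous_normed hg
  have hF0 : ∀ n x, 0 ≤ F n x := fun n x => by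
    simp only [hF, convolution_def, lsmul_apply, smul_eq_mul]
    exact integral_nonneg fun t => mul_nonneg ((φ n).nonneg_normed t) (hfpos _).le
  have hFd : ∀ n x v, fderiv ℝ (F n) x v = ⟪H n x, v⟫ := fun n x v =>
    moll_fderiv (φ n) f g hfg x v
  set K : Set E := tsupport h with hKdef
  have hK : IsCompact K := hc
  have hLF := moll_L1loc φ hφ f hf K hK
  have hLH := moll_L1loc φ hφ g hg K hK
  have hdc := dvg_cont h hh
  have hds : HasCompactSupport (dvg h) := hK.of_isClosed_subset (isClosed_tsupport _) (dvg_supp h)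
  obtain ⟨C, hC⟩ := hh.continuous.bounded_above_of_compact_support hc
  obtain ⟨D, hD⟩ := hdc.bounded_above_of_compact_support hds
  have hC0 : 0 ≤ C := (norm_nonneg _).trans (hC 0)
  have hD0 : 0 ≤ D := (norm_nonneg _).trans (hD 0)
  have hpos : ∀ n x, 0 < F n x + ε := fun n x => add_pos_of_nonneg_of_pos (hF0 n x) hε
  have hinv : ∀ n x, |(F n x + ε)⁻¹| ≤ ε⁻¹ := fun n x => by
    rw [abs_of_pos (inv_pos.2 (hpos n x))]
    exact inv_anti₀ hε (by linarith [hF0 n x])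
  have hlogc : ∀ n, ContDiff ℝ 1 (fun x => Real.log (F n x + ε)) := fun n =>
    ((hFs n).add contDiff_const).log fun x => (hpos n x).ne'
  have hinvc : ∀ n, Continuous (fun x => (F n x + ε)⁻¹) := fun n =>
    ((hFs n).continuous.add continuous_const).inv₀ fun x => (hpos n x).ne'
  have hid : ∀ n, ∫ x, Real.log (F n x + ε) * dvg h x
      = - ∫ x, (F n x + ε)⁻¹ * ⟪H n x, h x⟫ := fun n => by
    rw [smooth_ibp _ (hlogc n) h hh hc]
    congr 2
    ext x
    have hd : HasFDerivAt (fun x => Real.log (F n x + ε))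
        ((F n x + ε)⁻¹ • fderiv ℝ (F n) x) x :=
      (((hFs n).differentiable (by simp) x).hasFDerivAt.add_const ε).log (hpos n x).ne'
    rw [hd.fderiv, ← hFd]
    simp
  have hT1 : Tendsto (fun n => ∫ x, Real.log (F n x + ε) * dvg h x) atTop
      (𝓝 (∫ x, Real.log (f x + ε) * dvg h x)) := by
    have hlim : Tendsto (fun n => (ε⁻¹ * D) * ∫ x in K, ‖F n x - f x‖) atTop (𝓝 0) := by
      simpa using hLF.const_mul (ε⁻¹ * D)
    rw [tendsto_iff_norm_sub_tendsto_zero]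
    refine squeeze_zero (fun n => norm_nonneg _) (fun n => ?_) hlim
    have i1 : Integrable (fun x => Real.log (F n x + ε) * dvg h x) volume :=
      ((hlogc n).continuous.mul hdc).integrable_of_hasCompactSupport hds.mul_left
    have i2 : Integrable (fun x => Real.log (f x + ε) * dvg h x) volume :=
      hl.integrable_smul_right_of_hasCompactSupport hdc hds
    rw [← integral_sub i1 i2, Real.norm_eq_abs]
    refine abs_integral_le_of_indicator _ (fun x => F n x - f x) K hK.measurableSet
      (((hFs n).continuous.locallyIntegrable.sub hf).integrableOn_isCompact hK) _ fun x => ?_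
    by_cases hx : x ∈ K
    · rw [Set.indicator_of_mem hx, ← sub_mul, abs_mul, mul_right_comm]
      exact mul_le_mul (log_lip hε (hF0 n x) (hfpos x).le) (hD x) (abs_nonneg _)
        (by positivity)
    · rw [Set.indicator_of_notMem hx,
        image_eq_zero_of_notMem_tsupport (fun hx' => hx (dvg_supp h hx'))]
      simp
  have hgi : Integrable (fun x => ⟪g x, h x⟫) volume :=
    integrable_inner_test g h hg hh.continuous hc
  have hT2a : Tendsto (fun n => ∫ x, (F n x + ε)⁻¹ * ⟪H n x - g x, h x⟫) atTop (𝓝 0) := by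
    have hlim : Tendsto (fun n => (ε⁻¹ * C) * ∫ x in K, ‖H n x - g x‖) atTop (𝓝 0) := by
      simpa using hLH.const_mul (ε⁻¹ * C)
    refine squeeze_zero_norm (fun n => ?_) hlim
    refine abs_integral_le_of_indicator _ (fun x => H n x - g x) K hK.measurableSet
      (((hHc n).locallyIntegrable.sub hg).integrableOn_isCompact hK) _ fun x => ?_
    by_cases hx : x ∈ K
    · rw [Set.indicator_of_mem hx, abs_mul, mul_assoc]
      refine mul_le_mul (hinv n x) ?_ (abs_nonneg _) (by positivity)
      rw [mul_comm]
      exact (abs_real_inner_le_norm _ _).trans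
        (mul_le_mul_of_nonneg_left (hC x) (norm_nonneg _))
    · rw [Set.indicator_of_notMem hx, image_eq_zero_of_notMem_tsupport hx]
      simp
  have hT2b : Tendsto (fun n => ∫ x, (F n x + ε)⁻¹ * ⟪g x, h x⟫) atTop
      (𝓝 (∫ x, (f x + ε)⁻¹ * ⟪g x, h x⟫)) := by
    refine tendsto_integral_of_dominated_convergence (fun x => ε⁻¹ * ‖⟪g x, h x⟫‖)
      (fun n => (hinvc n).aestronglyMeasurable.mul hgi.aestronglyMeasurable)
      (hgi.norm.const_mul _) (fun n => Eventually.of_forall fun x => ?_) ?_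
    · rw [norm_mul]
      exact mul_le_mul_of_nonneg_right (hinv n x) (norm_nonneg _)
    · filter_upwards [hae] with x hx
      exact ((hx.add_const ε).inv₀ (by linarith [hfpos x])).mul_const _
  have hT2 : Tendsto (fun n => ∫ x, (F n x + ε)⁻¹ * ⟪H n x, h x⟫) atTop
      (𝓝 (∫ x, (f x + ε)⁻¹ * ⟪g x, h x⟫)) := by
    have := hT2a.add hT2b
    rw [zero_add] at this
    refine this.congr fun n => ?_
    have j1 : Integrable (fun x => (F n x + ε)⁻¹ * ⟪H n x - g x, h x⟫) volume := by
      refine Integrable.bdd_mul (c := ε⁻¹) (integrable_inner_test _ h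
        ((hHc n).locallyIntegrable.sub hg) hh.continuous hc)
        (hinvc n).aestronglyMeasurable (Eventually.of_forall (hinv n))
    have j2 : Integrable (fun x => (F n x + ε)⁻¹ * ⟪g x, h x⟫) volume :=
      Integrable.bdd_mul (c := ε⁻¹) hgi
        (hinvc n).aestronglyMeasurable (Eventually.of_forall (hinv n))
    rw [← integral_add j1 j2]
    congr 1
    ext x
    rw [inner_sub_left]
    ring
  simp_rw [hid] at hT1
  exact tendsto_nhds_unique hT1 hT2.neg

/-- Chain rule for weak derivatives: if `f > 0` has weak gradient `∇f`, and both
`|∇f|/f` and `log f` are locally integrable, then `log f` is weakly differentiable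
with weak gradient `∇f / f`. -/
theorem hasWeakGradient_log
    (f : E → ℝ) (hfpos : ∀ x, 0 < f x) (g : E → E)
    (hfg : HasWeakGradient f g)
    (h1 : LocallyIntegrable (fun x => ‖g x‖ / f x) volume)
    (h2 : LocallyIntegrable (fun x => Real.log (f x)) volume) :
    HasWeakGradient (fun x => Real.log (f x)) (fun x => (f x)⁻¹ • g x) := by
  have hf : LocallyIntegrable f volume := hfg.1
  have hg : LocallyIntegrable g volume := hfg.2.1
  have hfm : AEMeasurable f volume := hf.aestronglyMeasurable.aemeasurable
  have hgl : LocallyIntegrable (fun x => (f x)⁻¹ • g x) volume := by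
    refine h1.mono (hfm.inv.aestronglyMeasurable.smul hg.aestronglyMeasurable)
      (Eventually.of_forall fun x => ?_)
    rw [norm_smul, norm_div, norm_norm, norm_inv, div_eq_inv_mul]
  refine ⟨h2, hgl, fun h hh hc => ?_⟩
  have hdc := dvg_cont h hh
  have hK : IsCompact (tsupport h) := hc
  have hds : HasCompactSupport (dvg h) := hK.of_isClosed_subset (isClosed_tsupport _) (dvg_supp h)
  set ε : ℕ → ℝ := fun n => 1 / ((n : ℝ) + 1) with hεdef
  have hε0 : ∀ n, 0 < ε n := fun n => by simp only [hεdef]; positivity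
  have hε1 : ∀ n, ε n ≤ 1 := fun n => by
    simp only [hεdef]
    rw [div_le_one (by positivity)]
    have : (0 : ℝ) ≤ n := n.cast_nonneg
    linarith
  have hεt : Tendsto ε atTop (𝓝 0) := tendsto_one_div_add_atTop_nhds_zero_nat
  have hB : LocallyIntegrable (fun x => |Real.log (f x)| + (f x + 1)) volume :=
    LocallyIntegrable.add (fun x => (h2 x).norm) (hf.add (locallyIntegrable_const 1))
  have hlm : ∀ n, AEStronglyMeasurable (fun x => Real.log (f x + ε n)) volume := fun n =>
    (Real.measurable_log.comp_aemeasurable (hfm.add_const _)).aestronglyMeasurable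
  have hlb : ∀ n x, |Real.log (f x + ε n)| ≤ |Real.log (f x)| + (f x + 1) := fun n x =>
    (log_abs_le (hε0 n) (hfpos x)).trans (by linarith [hε1 n])
  have hl : ∀ n, LocallyIntegrable (fun x => Real.log (f x + ε n)) volume := fun n => by
    refine hB.mono (hlm n) (Eventually.of_forall fun x => ?_)
    exact (hlb n x).trans (le_abs_self _)
  have hid := fun n => eps_step f hfpos g hfg (ε n) (hε0 n) (hl n) h hh hc
  have hadd : ∀ x, Tendsto (fun n => f x + ε n) atTop (𝓝 (f x)) := fun x => by
    simpa using hεt.const_add (f x)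
  have hT1 : Tendsto (fun n => ∫ x, Real.log (f x + ε n) * dvg h x) atTop
      (𝓝 (∫ x, Real.log (f x) * dvg h x)) := by
    have hBi : Integrable (fun x => (|Real.log (f x)| + (f x + 1)) * ‖dvg h x‖) volume :=
      hB.integrable_smul_right_of_hasCompactSupport hdc.norm hds.norm
    refine tendsto_integral_of_dominated_convergence _
      (fun n => (hlm n).mul hdc.aestronglyMeasurable) hBi
      (fun n => Eventually.of_forall fun x => ?_) (Eventually.of_forall fun x => ?_)
    · rw [norm_mul]
      exact mul_le_mul_of_nonneg_right (hlb n x) (norm_nonneg _)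
    · exact ((Real.continuousAt_log (hfpos x).ne').tendsto.comp (hadd x)).mul_const _
  have hgi : Integrable (fun x => ⟪g x, h x⟫) volume :=
    integrable_inner_test g h hg hh.continuous hc
  have hT2 : Tendsto (fun n => ∫ x, (f x + ε n)⁻¹ * ⟪g x, h x⟫) atTop
      (𝓝 (∫ x, ⟪(f x)⁻¹ • g x, h x⟫)) := by
    have hBi := (integrable_inner_test _ h hgl hh.continuous hc).norm
    refine tendsto_integral_of_dominated_convergence _
      (fun n => (hfm.add_const _).inv.aestronglyMeasurable.mul hgi.aestronglyMeasurable) hBi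
      (fun n => Eventually.of_forall fun x => ?_) (Eventually.of_forall fun x => ?_)
    · rw [real_inner_smul_left, norm_mul, norm_mul]
      refine mul_le_mul_of_nonneg_right ?_ (norm_nonneg _)
      rw [Real.norm_of_nonneg (inv_nonneg.2 (add_pos (hfpos x) (hε0 n)).le),
        Real.norm_of_nonneg (inv_nonneg.2 (hfpos x).le)]
      exact inv_anti₀ (hfpos x) (by linarith [hε0 n])
    · rw [real_inner_smul_left]
      exact ((hadd x).inv₀ (hfpos x).ne').mul_const _
  simp_rw [hid] at hT1
  exact tendsto_nhds_unique hT1 hT2.neg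

end
end

section
/- Let R : ℝ^d × ℝ^d → ℝ be locally integrable with a locally integrable weak gradient. Suppose there exist Borel functions g, h : ℝ^d → ℝ^d such that the weak gradient satisfies ∇_x R(x,y) = g(x) and ∇_y R(x,y) = h(y) for Lebesgue-almost every (x,y) ∈ ℝ^d × ℝ^d. Then there exist Borel functions F, G : ℝ^d → ℝ such that R(x,y) = F(x) + G(y) for Lebesgue-almost every (x,y). -/
open MeasureTheory
open scoped RealInnerProductSpace

noncomputable section

variable {d : ℕ}

local notation "E" => EuclideanSpace ℝ (Fin d)

/-- Divergence of a vector field on `ℝ^d × ℝ^d`. -/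
def dvg2 (h : E × E → E × E) (z : E × E) : ℝ :=
  (∑ i : Fin d, ⟪(fderiv ℝ h z (EuclideanSpace.single i 1, 0)).1, EuclideanSpace.single i 1⟫)
    + ∑ i : Fin d, ⟪(fderiv ℝ h z ((0 : E), EuclideanSpace.single i 1)).2,
        EuclideanSpace.single i 1⟫

/-- `(gx, gy)` is the weak gradient of `R : ℝ^d × ℝ^d → ℝ`, with `gx = ∇_x R` the first
`d` components and `gy = ∇_y R` the last `d` components. -/
def HasWeakGradient2 (R : E × E → ℝ) (gx gy : E × E → E) : Prop :=
  LocallyIntegrable R volume ∧ LocallyIntegrable gx volume ∧ LocallyIntegrable gy volume ∧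
  ∀ h : E × E → E × E, ContDiff ℝ (⊤ : ℕ∞) h → HasCompactSupport h →
    ∫ z, R z * dvg2 h z = - ∫ z, (⟪gx z, (h z).1⟫ + ⟪gy z, (h z).2⟫)

instance volume_prod_isAddHaar : (volume : Measure (E × E)).IsAddHaarMeasure :=
  inferInstanceAs (((volume : Measure E).prod (volume : Measure E)).IsAddHaarMeasure)

lemma key_fderiv (R : E × E → ℝ) (gx gy : E × E → E)
    (hgrad : HasWeakGradient2 R gx gy) (g : E → E)
    (hae : ∀ᵐ z ∂(volume : Measure (E × E)), gx z = g z.1)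
    (φ : E × E → ℝ) (hφ : ContDiff ℝ (⊤ : ℕ∞) φ) (hc : HasCompactSupport φ)
    (p : E × E) (e : E) :
    ∫ z, R z * fderiv ℝ φ (p - z) (e, 0) = ∫ z : E × E, φ (p - z) * ⟪g z.1, e⟫ := by
  have hs : ContDiff ℝ (⊤ : ℕ∞) (fun z : E × E => φ (p - z)) :=
    hφ.comp (contDiff_const.sub contDiff_id)
  have hcs : HasCompactSupport (fun z : E × E => φ (p - z)) :=
    hc.comp_homeomorph (Homeomorph.subLeft p)
  have key := hgrad.2.2.2 (fun z => (φ (p - z) • e, 0))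
    ((hs.smul contDiff_const).prodMk contDiff_const) (by
      refine hcs.mono ?_
      intro z hz
      simp only [Function.mem_support] at hz ⊢
      contrapose! hz
      simp [hz])
  have hd : ∀ z : E × E, dvg2 (fun z : E × E => (φ (p - z) • e, (0 : E))) z
      = - fderiv ℝ φ (p - z) (e, 0) := by
    intro z
    have h1 : HasFDerivAt (fun z : E × E => φ (p - z))
        ((fderiv ℝ φ (p - z)).comp (-ContinuousLinearMap.id ℝ (E × E))) z := by
      have h2 := (hφ.differentiable (by simp) (p - z)).hasFDerivAt
      exact h2.comp z ((hasFDerivAt_id z).const_sub p)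
    have h3 := (h1.smul_const e).prodMk (hasFDerivAt_const (0 : E) z)
    unfold dvg2
    rw [h3.fderiv]
    have he : (e, (0 : E)) = ∑ i : Fin d, e i • ((EuclideanSpace.single i (1 : ℝ), 0) : E × E) := by
      have : e = ∑ i : Fin d, e i • EuclideanSpace.single i (1 : ℝ) := by
        ext j; simp [Finset.sum_apply, Pi.single_apply]
      refine Prod.ext ?_ ?_
      · rw [Prod.fst_sum]; exact this
      · rw [Prod.snd_sum]; simp
    conv_rhs => rw [he, map_sum]
    simp only [map_smul]
    simp [EuclideanSpace.inner_single_right, ← Finset.sum_neg_distrib, mul_comm]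
  simp only [hd, mul_neg, integral_neg, neg_inj] at key
  rw [key]
  refine integral_congr_ae ?_
  filter_upwards [hae] with z hz
  simp [hz, real_inner_smul_right]

lemma ae_four_points (R : E × E → ℝ) (gx gy : E × E → E)
    (hgrad : HasWeakGradient2 R gx gy) (g : E → E)
    (hae : ∀ᵐ z ∂(volume : Measure (E × E)), gx z = g z.1) (v w : E) :
    ∀ᵐ z ∂(volume : Measure (E × E)),
      R (z + (v, w)) - R (z + (v, 0)) - (R (z + (0, w)) - R z) = 0 := by
  have hR := hgrad.1
  have ht : ∀ p : E × E, LocallyIntegrable (fun z => R (z + p)) volume := by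
    intro p
    have := (locallyIntegrable_map_homeomorph (Homeomorph.addRight p) (f := R)
      (μ := (volume : Measure (E × E)))).1 (by
        have : Measure.map (Homeomorph.addRight p) (volume : Measure (E × E)) = volume :=
          map_add_right_eq_self _ p
        rwa [this])
    exact this
  have ht0 := ht 0
  refine ae_eq_zero_of_integral_contDiff_smul_eq_zero
    (((ht _).sub (ht _)).sub ((ht _).sub hR)) ?_
  intro ψ hψ hψc
  set φ : E × E → ℝ := fun z => ψ (-z) with hφd
  have hφ : ContDiff ℝ (⊤ : ℕ∞) φ := hψ.comp contDiff_neg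
  have hφc : HasCompactSupport φ := hψc.comp_homeomorph (Homeomorph.neg (E × E))
  set Φ : E × E → ℝ := fun p => ∫ z, R z * φ (p - z) with hΦ
  have hder : ∀ p, ∃ L : E × E →L[ℝ] ℝ, HasFDerivAt Φ L p ∧
      ∀ e : E, L (e, 0) = ∫ z : E × E, φ (p - z) * ⟪g z.1, e⟫ := by
    intro p
    refine ⟨_, hφc.hasFDerivAt_convolution_right (ContinuousLinearMap.mul ℝ ℝ) hR
      (hφ.of_le (by simp)) p, ?_⟩
    intro e
    rw [convolution_precompR_apply _ hR (hφc.fderiv (𝕜 := ℝ)) (hφ.continuous_fderiv (by simp))]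
    rw [← key_fderiv R gx gy hgrad g hae φ hφ hφc p e]
    rfl
  have hconst : Φ (v, w) - Φ (v, 0) = Φ (0, w) - Φ (0, 0) := by
    have hd : ∀ x : E, HasFDerivAt (fun x : E => Φ (x, w) - Φ (x, 0)) (0 : E →L[ℝ] ℝ) x := by
      intro x
      obtain ⟨L, hL, hL'⟩ := hder (x, w)
      obtain ⟨M, hM, hM'⟩ := hder (x, 0)
      have h1 := hL.comp x (hasFDerivAt_prodMk_left (𝕜 := ℝ) x w)
      have h2 := hM.comp x (hasFDerivAt_prodMk_left (𝕜 := ℝ) x (0 : E))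
      refine (h1.sub h2).congr_fderiv ?_
      ext1 e
      have : ∫ z : E × E, φ ((x, w) - z) * ⟪g z.1, e⟫
          = ∫ z : E × E, φ ((x, 0) - z) * ⟪g z.1, e⟫ := by
        rw [← integral_add_right_eq_self _ ((0, w) : E × E)]
        refine integral_congr_ae (Filter.Eventually.of_forall fun z => ?_)
        have : (x, w) - (z + (0, w)) = (x, 0) - z := by
          ext1 <;> simp
        simp only [this]
        simp
      simp [hL', hM', this]
    exact is_const_of_fderiv_eq_zero (𝕜 := ℝ) (fun x => (hd x).differentiableAt)
      (fun x => (hd x).fderiv) v 0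
  have hI : ∀ p : E × E, Integrable (fun z => ψ z • R (z + p)) := fun p =>
    (ht p).integrable_smul_left_of_hasCompactSupport hψ.continuous hψc
  have hI0 : Integrable (fun z => ψ z • R z) :=
    hR.integrable_smul_left_of_hasCompactSupport hψ.continuous hψc
  have hval : ∀ p : E × E, ∫ z, ψ z • R (z + p) = Φ p := by
    intro p
    rw [hΦ]
    simp only []
    rw [← integral_add_right_eq_self (fun z => R z * φ (p - z)) p]
    refine integral_congr_ae (Filter.Eventually.of_forall fun z => ?_)
    simp [hφd, mul_comm]
  have hval0 : ∫ z, ψ z • R z = Φ 0 := by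
    simpa using hval 0
  simp only [smul_sub]
  rw [integral_sub, integral_sub, integral_sub, hval, hval, hval, hval0, hconst]
  · exact sub_self _
  · exact hI _
  · exact hI0
  · exact hI _
  · exact hI _
  · exact (hI _).sub (hI _)
  · exact (hI _).sub hI0

/-- If the weak gradient of `R(x,y)` satisfies `∇_x R(x,y) = g(x)` and
`∇_y R(x,y) = h(y)` a.e., then `R(x,y) = F(x) + G(y)` a.e. for some Borel `F, G`. -/
theorem additive_decomposition_of_separated_gradient
    (R : E × E → ℝ) (gx gy : E × E → E)
    (hgrad : HasWeakGradient2 R gx gy)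
    (g h : E → E) (hg : Measurable g) (hh : Measurable h)
    (hae : ∀ᵐ z ∂(volume : Measure (E × E)), gx z = g z.1 ∧ gy z = h z.2) :
    ∃ F G : E → ℝ, Measurable F ∧ Measurable G ∧
      ∀ᵐ z ∂(volume : Measure (E × E)), R z = F z.1 + G z.2 := by
  classical
  obtain ⟨R', hR'm, hRR'⟩ := hgrad.1.aestronglyMeasurable
  have hR'm := hR'm.measurable
  have hgrad' : HasWeakGradient2 R' gx gy := by
    refine ⟨hgrad.1.congr hRR', hgrad.2.1, hgrad.2.2.1, fun k hk hkc => ?_⟩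
    rw [← hgrad.2.2.2 k hk hkc]
    refine integral_congr_ae ?_
    filter_upwards [hRR'] with z hz
    rw [hz]
  have h4 := ae_four_points R' gx gy hgrad' g (hae.mono fun z hz => hz.1)
  have h5 : ∀ᵐ z ∂(volume : Measure (E × E)), ∀ᵐ p ∂(volume : Measure (E × E)),
      R' (z + (p.1, p.2)) - R' (z + (p.1, 0)) - (R' (z + (0, p.2)) - R' z) = 0 := by
    rw [Measure.ae_ae_comm]
    · exact Filter.Eventually.of_forall fun p => h4 p.1 p.2
    · exact measurableSet_eq_fun (by fun_prop) measurable_const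
  obtain ⟨z₀, hz₀⟩ := h5.exists
  have hq : Measure.QuasiMeasurePreserving (fun z : E × E => z + (-z₀)) volume volume :=
    (measurePreserving_add_right volume (-z₀)).quasiMeasurePreserving
  have h7 := hq.ae hz₀
  refine ⟨fun x => R' (x, z₀.2), fun y => R' (z₀.1, y) - R' z₀, by fun_prop, by fun_prop, ?_⟩
  filter_upwards [hRR', h7] with z hz hz7
  rw [hz]
  have e1 : z₀ + ((z + -z₀).1, (z + -z₀).2) = z := by ext1 <;> simp
  have e2 : z₀ + ((z + -z₀).1, (0 : E)) = (z.1, z₀.2) := by ext1 <;> simp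
  have e3 : z₀ + ((0 : E), (z + -z₀).2) = (z₀.1, z.2) := by ext1 <;> simp
  rw [e1, e2, e3] at hz7
  linarith

end
end
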